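/- Let λ ≥ 1 be a real number. If f is a close-to-convex function on the unit disk with Taylor coefficients a_k, then |λ a_4² − a_7| ≤ 16λ − 7. -/

import Mathlib

open Complex Metric

/-- The k-th Taylor coefficient of `f` at `0`: `a_k = f^{(k)}(0)/k!`. -/
noncomputable def taylorCoeff (f : ℂ → ℂ) (k : ℕ) : ℂ :=
  iteratedDeriv k f 0 / (Nat.factorial k)

/-- `g` is a (normalized) starlike function on the unit disk. -/
def IsStarlikeFn (g : ℂ → ℂ) : Prop :=
  DifferentiableOn ℂ g (ball (0 : ℂ) 1) ∧ g 0 = 0 ∧ deriv g 0 = 1 ∧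
    ∀ z ∈ ball (0 : ℂ) 1 \ {0}, 0 < (z * deriv g z / g z).re

/-- `f` is a (normalized) close-to-convex function on the unit disk. -/
def IsCloseToConvex (f : ℂ → ℂ) : Prop :=
  DifferentiableOn ℂ f (ball (0 : ℂ) 1) ∧ f 0 = 0 ∧ deriv f 0 = 1 ∧
    ∃ θ : ℝ, ∃ g : ℂ → ℂ, IsStarlikeFn g ∧
      ∀ z ∈ ball (0 : ℂ) 1 \ {0},
        0 < (Complex.exp (θ * Complex.I) * z * deriv f z / g z).re


/-! ### Part 1: the extremal inequality -/

lemma zal_alg (lam a s b t : ℝ) (hlam : 1 ≤ lam) (h1 : a ^ 2 + s ^ 2 = 1) (h2 : b ^ 2 + t ^ 2 = 1) :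
    lam * ((5 * a - 3 * b) / 2) ^ 2 - (4 * (a ^ 2 - s ^ 2) - 3 * (a * b - s * t))
      ≤ 16 * lam - 7 := by
  have ha : |a| ≤ 1 := abs_le_one_iff_mul_self_le_one.mpr (by nlinarith [sq_nonneg s])
  have hb : |b| ≤ 1 := abs_le_one_iff_mul_self_le_one.mpr (by nlinarith [sq_nonneg t])
  rw [abs_le] at ha hb
  have h16 : ((5 * a - 3 * b) / 2) ^ 2 ≤ 16 := by
    have : |(5 * a - 3 * b) / 2| ≤ 4 := abs_le.mpr ⟨by linarith, by linarith⟩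
    nlinarith [sq_abs ((5 * a - 3 * b) / 2), abs_nonneg ((5 * a - 3 * b) / 2)]
  have e : ((5 * a - 3 * b) / 2) ^ 2 - (4 * (a ^ 2 - s ^ 2) - 3 * (a * b - s * t)) ≤ 9 := by
    nlinarith [sq_nonneg (s + 3 * t), sq_nonneg (a + b)]
  nlinarith [mul_nonneg (sub_nonneg.mpr hlam) (sub_nonneg.mpr h16)]

/-- The linear functional evaluated on `(1 - x z) / (1 - w z) ^ 3`. -/
noncomputable def zalE (c lam : ℝ) (ξ x w : ℂ) : ℂ :=
  (c * lam * ξ / 2) * (10 * w ^ 3 - x * (6 * w ^ 2))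
    - (ξ ^ 2 / 7) * (28 * w ^ 6 - x * (21 * w ^ 5))

lemma zalE_circle (c lam : ℝ) (hlam : 1 ≤ lam) (ξ x w : ℂ) (hξ : ‖ξ‖ = 1) (hx : ‖x‖ = 1)
    (hw : ‖w‖ = 1) : (zalE c lam ξ x w).re ≤ lam * c ^ 2 + 16 * lam - 7 := by
  set U := ξ * w ^ 3 with hU
  set V := ξ * x * w ^ 2 with hV
  have nU : U.re ^ 2 + U.im ^ 2 = 1 := by
    have : ‖U‖ = 1 := by simp [hU, hξ, hw]
    have h2 := Complex.sq_norm U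
    rw [this, Complex.normSq_apply] at h2; nlinarith
  have nV : V.re ^ 2 + V.im ^ 2 = 1 := by
    have : ‖V‖ = 1 := by simp [hV, hξ, hw, hx]
    have h2 := Complex.sq_norm V
    rw [this, Complex.normSq_apply] at h2; nlinarith
  have e : zalE c lam ξ x w = ((c * lam : ℝ) : ℂ) * (5 * U - 3 * V) - (4 * U ^ 2 - 3 * (U * V)) := by
    simp only [zalE, hU, hV]; push_cast; ring
  have e2 : (zalE c lam ξ x w).re = c * lam * (5 * U.re - 3 * V.re)
      - (4 * (U.re ^ 2 - U.im ^ 2) - 3 * (U.re * V.re - U.im * V.im)) := by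
    rw [e]; simp [pow_two]
  have := zal_alg lam U.re U.im V.re V.im hlam nU nV
  rw [e2]
  nlinarith [mul_nonneg (by linarith : (0:ℝ) ≤ lam) (sq_nonneg (c - (5 * U.re - 3 * V.re) / 2))]

lemma zalE_disc (c lam : ℝ) (hlam : 1 ≤ lam) (ξ x w : ℂ) (hξ : ‖ξ‖ = 1) (hx : ‖x‖ = 1)
    (hw : ‖w‖ ≤ 1) : (zalE c lam ξ x w).re ≤ lam * c ^ 2 + 16 * lam - 7 := by
  have hd : Differentiable ℂ (fun w => Complex.exp (zalE c lam ξ x w)) := by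
    unfold zalE; fun_prop
  have := Complex.norm_le_of_forall_mem_frontier_norm_le (U := ball (0:ℂ) 1) isBounded_ball
    (f := fun w => Complex.exp (zalE c lam ξ x w)) (C := Real.exp (lam * c ^ 2 + 16 * lam - 7))
    hd.diffContOnCl (z := w) (by
      intro z hz
      rw [frontier_ball _ one_ne_zero, mem_sphere_zero_iff_norm] at hz
      rw [Complex.norm_exp]
      exact Real.exp_le_exp.mpr (zalE_circle c lam hlam ξ x z hξ hx hz)) (by
      rw [closure_ball _ one_ne_zero]; simpa using hw)
  rw [Complex.norm_exp] at this
  exact Real.exp_le_exp.mp this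

lemma re_sub_le_of_deriv (G G' : ℂ → ℂ) (N N' : ℝ → ℝ) (hG : ∀ t, HasDerivAt G (G' t) t)
    (hN : ∀ t, HasDerivAt N (N' t) t)
    (h : ∀ t : ℝ, 0 ≤ t → t ≤ 1 → (G' t).re ≤ N' t) : (G 1).re - (G 0).re ≤ N 1 - N 0 := by
  have hd : ∀ t : ℝ, HasDerivAt (fun t : ℝ => N t - (G t).re) (N' t - (G' t).re) t := by
    intro t
    exact (hN t).sub (hG t).real_of_complex
  have hm : MonotoneOn (fun t : ℝ => N t - (G t).re) (Set.Icc 0 1) := by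
    apply monotoneOn_of_deriv_nonneg (convex_Icc 0 1)
    · exact fun t _ => (hd t).continuousAt.continuousWithinAt
    · exact fun t _ => (hd t).differentiableAt.differentiableWithinAt
    · intro t ht
      rw [interior_Icc] at ht
      rw [(hd t).deriv]
      linarith [h t ht.1.le ht.2.le]
  have := hm (Set.left_mem_Icc.mpr zero_le_one) (Set.right_mem_Icc.mpr zero_le_one) zero_le_one
  simp at this
  linarith

noncomputable def zalG (m : ℕ) (y d t : ℂ) : ℂ :=
  ∑ k ∈ Finset.range (m + 1),
    ((m + 2) * (m + 1) * (m.choose k) / (k + 2)) * y ^ (m - k) * d ^ k * t ^ (k + 2)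

lemma zalG_deriv (m : ℕ) (y d t : ℂ) :
    HasDerivAt (zalG m y d) ((m + 2) * (m + 1) * t * (y + t * d) ^ m) t := by
  have : HasDerivAt (zalG m y d) (∑ k ∈ Finset.range (m + 1),
    ((m + 2) * (m + 1) * (m.choose k) / (k + 2)) * y ^ (m - k) * d ^ k *
      (((k + 2 : ℕ) : ℂ) * t ^ (k + 1))) t := by
    unfold zalG
    apply HasDerivAt.fun_sum
    intro k _
    exact (hasDerivAt_pow (k + 2) t).const_mul _
  convert this using 1
  rw [add_comm y, add_pow, Finset.mul_sum]
  apply Finset.sum_congr rfl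
  intro k _
  have : (k : ℂ) + 2 ≠ 0 := by exact_mod_cast (by omega : k + 2 ≠ 0)
  push_cast
  field_simp
  ring

/-- coefficients of `(1 - v z)⁻² (1 - y z)⁻¹`. -/
noncomputable def zalD (m : ℕ) (v y : ℂ) : ℂ :=
  ∑ j ∈ Finset.range (m + 1), (j + 1) * v ^ j * y ^ (m - j)

lemma zalG_zero (m : ℕ) (y d : ℂ) : zalG m y d 0 = 0 := by
  simp [zalG]

lemma zalG_one2 (v y : ℂ) : zalG 2 y (v - y) 1 = zalD 2 v y := by
  simp [zalG, zalD, Finset.sum_range_succ, Nat.choose]; ring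
lemma zalG_one3 (v y : ℂ) : zalG 3 y (v - y) 1 = zalD 3 v y := by
  simp [zalG, zalD, Finset.sum_range_succ, Nat.choose]; ring
lemma zalG_one5 (v y : ℂ) : zalG 5 y (v - y) 1 = zalD 5 v y := by
  simp [zalG, zalD, Finset.sum_range_succ, Nat.choose]; ring
lemma zalG_one6 (v y : ℂ) : zalG 6 y (v - y) 1 = zalD 6 v y := by
  simp [zalG, zalD, Finset.sum_range_succ, Nat.choose]; ring

lemma norm_segment_le (v y : ℂ) (hv : ‖v‖ ≤ 1) (hy : ‖y‖ ≤ 1) (t : ℝ) (h0 : 0 ≤ t) (h1 : t ≤ 1) :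
    ‖y + t * (v - y)‖ ≤ 1 := by
  have e : y + t * (v - y) = ((1 - t : ℝ) : ℂ) * y + (t : ℂ) * v := by push_cast; ring
  rw [e]
  refine (norm_add_le _ _).trans ?_
  rw [norm_mul, norm_mul, Complex.norm_real, Complex.norm_real, Real.norm_of_nonneg h0,
    Real.norm_of_nonneg (by linarith)]
  nlinarith [mul_le_mul_of_nonneg_left hv h0,
    mul_le_mul_of_nonneg_left hy (by linarith : (0:ℝ) ≤ 1 - t)]

lemma zalD_le (c lam : ℝ) (hlam : 1 ≤ lam) (ξ x v y : ℂ) (hξ : ‖ξ‖ = 1) (hx : ‖x‖ = 1)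
    (hv : ‖v‖ ≤ 1) (hy : ‖y‖ ≤ 1) :
    ((c * lam * ξ / 2) * (zalD 3 v y - x * zalD 2 v y)
      - (ξ ^ 2 / 7) * (zalD 6 v y - x * zalD 5 v y)).re ≤ lam * c ^ 2 + 16 * lam - 7 := by
  have := re_sub_le_of_deriv
    (fun t => (c * lam * ξ / 2) * (zalG 3 y (v - y) t - x * zalG 2 y (v - y) t)
      - (ξ ^ 2 / 7) * (zalG 6 y (v - y) t - x * zalG 5 y (v - y) t))
    (fun t => 2 * t * zalE c lam ξ x (y + t * (v - y)))
    (fun t => (lam * c ^ 2 + 16 * lam - 7) * t ^ 2)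
    (fun t => (lam * c ^ 2 + 16 * lam - 7) * (2 * t)) (by
      intro t
      have := (((zalG_deriv 3 y (v - y) t).sub ((zalG_deriv 2 y (v - y) t).const_mul x)).const_mul
        (c * lam * ξ / 2)).sub
        (((zalG_deriv 6 y (v - y) t).sub ((zalG_deriv 5 y (v - y) t).const_mul x)).const_mul
          (ξ ^ 2 / 7))
      refine HasDerivAt.congr_deriv this ?_
      unfold zalE; push_cast; ring) (by
      intro t
      simpa using (hasDerivAt_pow 2 t).const_mul (lam * c ^ 2 + 16 * lam - 7)) (by
      intro t h0 h1
      have := zalE_disc c lam hlam ξ x _ hξ hx (norm_segment_le v y hv hy t h0 h1)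
      have e : (2 * (t : ℂ) * zalE c lam ξ x (y + t * (v - y))).re
          = 2 * t * (zalE c lam ξ x (y + t * (v - y))).re := by
        rw [show (2 * (t : ℂ)) = ((2 * t : ℝ) : ℂ) by push_cast; ring, Complex.re_ofReal_mul]
      rw [e]
      nlinarith)
  simp only [zalG_one2, zalG_one3, zalG_one5, zalG_one6, zalG_zero] at this
  simpa using this

noncomputable def zalJ (j : ℕ) (b e s : ℂ) : ℂ :=
  ∑ k ∈ Finset.range (j + 1),
    ((j + 1) * (j.choose k) / (k + 1)) * b ^ (j - k) * e ^ k * s ^ (k + 1)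

lemma zalJ_deriv (j : ℕ) (b e s : ℂ) :
    HasDerivAt (zalJ j b e) ((j + 1) * (b + s * e) ^ j) s := by
  have : HasDerivAt (zalJ j b e) (∑ k ∈ Finset.range (j + 1),
    ((j + 1) * (j.choose k) / (k + 1)) * b ^ (j - k) * e ^ k *
      (((k + 1 : ℕ) : ℂ) * s ^ k)) s := by
    unfold zalJ
    apply HasDerivAt.fun_sum
    intro k _
    exact (hasDerivAt_pow (k + 1) s).const_mul _
  convert this using 1
  rw [add_comm b, add_pow, Finset.mul_sum]
  apply Finset.sum_congr rfl
  intro k _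
  have : (k : ℂ) + 1 ≠ 0 := by exact_mod_cast (by omega : k + 1 ≠ 0)
  push_cast
  field_simp
  ring

lemma zalJ_zero (j : ℕ) (b e : ℂ) : zalJ j b e 0 = 0 := by
  simp [zalJ]

/-- complete homogeneous polynomials in two variables -/
noncomputable def zalh (j : ℕ) (a b : ℂ) : ℂ := ∑ i ∈ Finset.range (j + 1), a ^ i * b ^ (j - i)

lemma zalJ_one (a b : ℂ) (j : ℕ) (hj : j < 7) : zalJ j b (a - b) 1 = zalh j a b := by
  interval_cases j <;> simp [zalJ, zalh, Finset.sum_range_succ, Nat.choose] <;> ring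

/-- complete homogeneous polynomials in three variables -/
noncomputable def zalH (m : ℕ) (a b y : ℂ) : ℂ :=
  ∑ j ∈ Finset.range (m + 1), zalh j a b * y ^ (m - j)

noncomputable def zalK (m : ℕ) (a b y s : ℂ) : ℂ :=
  ∑ j ∈ Finset.range (m + 1), zalJ j b (a - b) s * y ^ (m - j)

lemma zalK_deriv (m : ℕ) (a b y s : ℂ) :
    HasDerivAt (zalK m a b y) (zalD m (b + s * (a - b)) y) s := by
  unfold zalK zalD
  apply HasDerivAt.fun_sum
  intro j _
  exact (zalJ_deriv j b (a - b) s).mul_const _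

lemma zalK_zero (m : ℕ) (a b y : ℂ) : zalK m a b y 0 = 0 := by
  simp [zalK, zalJ_zero]

lemma zalK_one (m : ℕ) (a b y : ℂ) (hm : m < 7) : zalK m a b y 1 = zalH m a b y := by
  unfold zalK zalH
  apply Finset.sum_congr rfl
  intro j hj
  rw [zalJ_one a b j (by have := Finset.mem_range.mp hj; omega)]

lemma zalH_le (c lam : ℝ) (hlam : 1 ≤ lam) (ξ x a b y : ℂ) (hξ : ‖ξ‖ = 1) (hx : ‖x‖ = 1)
    (ha : ‖a‖ ≤ 1) (hb : ‖b‖ ≤ 1) (hy : ‖y‖ ≤ 1) :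
    ((c * lam * ξ / 2) * (zalH 3 a b y - x * zalH 2 a b y)
      - (ξ ^ 2 / 7) * (zalH 6 a b y - x * zalH 5 a b y)).re ≤ lam * c ^ 2 + 16 * lam - 7 := by
  have := re_sub_le_of_deriv
    (fun t => (c * lam * ξ / 2) * (zalK 3 a b y t - x * zalK 2 a b y t)
      - (ξ ^ 2 / 7) * (zalK 6 a b y t - x * zalK 5 a b y t))
    (fun t => (c * lam * ξ / 2) * (zalD 3 (b + t * (a - b)) y - x * zalD 2 (b + t * (a - b)) y)
      - (ξ ^ 2 / 7) * (zalD 6 (b + t * (a - b)) y - x * zalD 5 (b + t * (a - b)) y))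
    (fun t => (lam * c ^ 2 + 16 * lam - 7) * t)
    (fun _ => (lam * c ^ 2 + 16 * lam - 7)) (by
      intro t
      exact (((zalK_deriv 3 a b y t).sub ((zalK_deriv 2 a b y t).const_mul x)).const_mul
        (c * lam * ξ / 2)).sub
        (((zalK_deriv 6 a b y t).sub ((zalK_deriv 5 a b y t).const_mul x)).const_mul
          (ξ ^ 2 / 7))) (by
      intro t
      simpa using (hasDerivAt_id t).const_mul (lam * c ^ 2 + 16 * lam - 7)) (by
      intro t h0 h1
      exact zalD_le c lam hlam ξ x _ y hξ hx (norm_segment_le a b ha hb t h0 h1) hy)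
  simp only [zalK_zero, zalK_one _ a b y (by norm_num : 2 < 7), zalK_one _ a b y (by norm_num : 3 < 7),
    zalK_one _ a b y (by norm_num : 5 < 7), zalK_one _ a b y (by norm_num : 6 < 7)] at this
  simpa using this

/-! ### Part 2: moments of functions with real part larger than 1/2 -/

lemma taylorCoeff_eq_avg (h : ℂ → ℂ) (hd : DifferentiableOn ℂ h (ball 0 1)) (r : ℝ) (h0 : 0 < r)
    (h1 : r < 1) (n : ℕ) : Real.circleAverage (fun z => h z / z ^ n) 0 r = taylorCoeff h n := by
  have hd' : DifferentiableOn ℂ h (closedBall 0 r) := hd.mono (closedBall_subset_ball h1)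
  have := hd'.circleIntegral_one_div_sub_center_pow_smul h0 n
  rw [Real.circleAverage_eq_circleIntegral h0.ne']
  have e : (∮ z in C(0, r), (z - 0)⁻¹ • (h z / z ^ n)) = ∮ z in C(0, r), (1 / (z - 0) ^ (n + 1)) • h z := by
    congr 1; ext z
    simp only [sub_zero, smul_eq_mul, pow_succ]
    simp [div_eq_mul_inv]; ring
  rw [e, this, taylorCoeff]
  have := two_pi_I_ne_zero
  simp only [smul_eq_mul]
  field_simp

lemma avg_mul_pow (h : ℂ → ℂ) (hd : DifferentiableOn ℂ h (ball 0 1)) (r : ℝ) (h0 : 0 < r)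
    (h1 : r < 1) (n : ℕ) : Real.circleAverage (fun z => h z * z ^ n) 0 r = h 0 * 0 ^ n := by
  have hd' : DifferentiableOn ℂ (fun z => h z * z ^ n) (closedBall 0 r) :=
    (hd.mono (closedBall_subset_ball h1)).mul (by fun_prop)
  have : DiffContOnCl ℂ (fun z => h z * z ^ n) (ball 0 |r|) := by
    rw [abs_of_pos h0]
    exact (hd'.mono closure_ball_subset_closedBall).diffContOnCl
  exact this.circleAverage

lemma moment_nonneg_r (h : ℂ → ℂ) (hd : DifferentiableOn ℂ h (ball 0 1)) (h00 : h 0 = 1)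
    (hre : ∀ z ∈ ball (0 : ℂ) 1, 1 / 2 < (h z).re) (N : ℕ) (s : ℕ → ℂ)
    (hs : ∀ y : ℂ, ‖y‖ = 1 → 0 ≤ (∑ n ∈ Finset.range (N + 1), s n * y ^ n).re)
    (r : ℝ) (h0 : 0 < r) (h1 : r < 1) :
    0 ≤ (∑ n ∈ Finset.range (N + 1), s n * r ^ n * taylorCoeff h n).re := by
  set F : ℂ → ℂ := fun z => 2 * h z - 1 with hF
  have hFd : DifferentiableOn ℂ F (ball 0 1) := (hd.const_mul 2).sub_const 1
  have hFc : ContinuousOn F (sphere 0 |r|) := by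
    rw [abs_of_pos h0]
    exact hFd.continuousOn.mono (sphere_subset_closedBall.trans (closedBall_subset_ball h1))
  have hFn : ∀ n, taylorCoeff F n = 2 * taylorCoeff h n - (if n = 0 then 1 else 0) := by
    intro n
    rw [← taylorCoeff_eq_avg F hFd r h0 h1, ← taylorCoeff_eq_avg h hd r h0 h1]
    have hc1 : CircleIntegrable (fun z => (2:ℂ) • (h z / z ^ n)) 0 r := by
      apply ContinuousOn.circleIntegrable'
      rw [abs_of_pos h0]
      refine ContinuousOn.const_smul (ContinuousOn.div (hd.continuousOn.mono (sphere_subset_closedBall.trans (closedBall_subset_ball h1))) (continuous_pow n).continuousOn ?_) (2 : ℂ)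
      intro z hz
      exact pow_ne_zero _ (ne_of_mem_sphere hz h0.ne')
    have hone : Real.circleAverage (fun z : ℂ => 1 / z ^ n) 0 r = if n = 0 then 1 else 0 := by
      rw [taylorCoeff_eq_avg (fun _ => 1) (by fun_prop) r h0 h1, taylorCoeff, iteratedDeriv_const]
      split_ifs with hn <;> simp [hn]
    have hc2 : CircleIntegrable (fun z : ℂ => 1 / z ^ n) 0 r := by
      apply ContinuousOn.circleIntegrable'
      rw [abs_of_pos h0]
      refine ContinuousOn.div (by fun_prop) (by fun_prop) ?_
      intro z hz
      exact pow_ne_zero _ (ne_of_mem_sphere hz h0.ne')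
    rw [← hone]
    have e : (fun z => F z / z ^ n) = (fun z => (2:ℂ) • (h z / z ^ n)) - (fun z : ℂ => 1 / z ^ n) := by
      ext z; simp [hF]; ring
    rw [e, Real.circleAverage_sub hc1 hc2, Real.circleAverage_fun_smul]
    simp
  -- the integrand
  set S : ℂ → ℂ := fun z => ∑ n ∈ Finset.range (N + 1), (s n * r ^ n) • (F z / z ^ n) with hS
  set T : ℂ → ℂ := fun z => ∑ n ∈ Finset.range (N + 1), ((starRingEnd ℂ) (s n) / r ^ n) • (F z * z ^ n) with hT
  have iS : ∀ n, CircleIntegrable (fun z => F z / z ^ n) 0 r := by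
    intro n
    apply ContinuousOn.circleIntegrable'
    refine hFc.div (by fun_prop) ?_
    intro z hz
    rw [abs_of_pos h0] at hz
    exact pow_ne_zero _ (ne_of_mem_sphere hz h0.ne')
  have iT : ∀ n, CircleIntegrable (fun z => F z * z ^ n) 0 r := by
    intro n
    apply ContinuousOn.circleIntegrable'
    exact hFc.mul (by fun_prop)
  have aS : Real.circleAverage S 0 r = ∑ n ∈ Finset.range (N + 1), (s n * r ^ n) * taylorCoeff F n := by
    rw [hS, Real.circleAverage_fun_sum (f := fun n z => (s n * r ^ n) • (F z / z ^ n)) (fun n _ => (iS n).const_smul)]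
    apply Finset.sum_congr rfl
    intro n _
    rw [Real.circleAverage_fun_smul, taylorCoeff_eq_avg F hFd r h0 h1, smul_eq_mul]
  have aT : Real.circleAverage T 0 r = (starRingEnd ℂ) (s 0) := by
    rw [hT, Real.circleAverage_fun_sum (f := fun n z => ((starRingEnd ℂ) (s n) / r ^ n) • (F z * z ^ n)) (fun n _ => (iT n).const_smul)]
    have : ∀ n ∈ Finset.range (N + 1), Real.circleAverage (fun z => ((starRingEnd ℂ) (s n) / r ^ n) • (F z * z ^ n)) 0 r = if n = 0 then (starRingEnd ℂ) (s 0) else 0 := by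
      intro n _
      rw [Real.circleAverage_fun_smul, avg_mul_pow F hFd r h0 h1, smul_eq_mul]
      split_ifs with hn
      · subst hn; simp [hF, h00]; norm_num
      · simp [hn]
    rw [Finset.sum_congr rfl this]
    simp
  have cS : CircleIntegrable S 0 r := by
    rw [hS]
    exact CircleIntegrable.fun_sum _ (fun n _ => (iS n).const_smul)
  have cT : CircleIntegrable T 0 r := by
    rw [hT]
    exact CircleIntegrable.fun_sum _ (fun n _ => (iT n).const_smul)
  have key : 0 ≤ Real.circleAverage (Complex.reCLM ∘ (S + T)) 0 r := by
    apply Real.circleAverage_nonneg_of_nonneg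
    intro z hz
    rw [abs_of_pos h0] at hz
    have hz0 : z ≠ 0 := ne_of_mem_sphere hz h0.ne'
    have hzn : ‖z‖ = r := by simpa using hz
    have hr0 : (r : ℂ) ≠ 0 := by exact_mod_cast h0.ne'
    set y : ℂ := r / z with hy
    have hyn : ‖y‖ = 1 := by
      rw [hy, norm_div, hzn, Complex.norm_real, Real.norm_of_nonneg h0.le, div_self h0.ne']
    have hcy : (starRingEnd ℂ) y = z / r := by
      have h2 : y * (starRingEnd ℂ) y = 1 := by
        rw [Complex.mul_conj, Complex.normSq_eq_norm_sq, hyn]; simp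
      have h3 : y * (z / r) = 1 := by rw [hy]; field_simp
      have hy0 : y ≠ 0 := by rw [← norm_pos_iff, hyn]; norm_num
      exact mul_left_cancel₀ hy0 (h2.trans h3.symm)
    have e1 : S z = F z * ∑ n ∈ Finset.range (N + 1), s n * y ^ n := by
      simp only [hS, Finset.mul_sum]
      apply Finset.sum_congr rfl
      intro n _
      rw [hy, div_pow, smul_eq_mul]; ring
    have e2 : T z = F z * (starRingEnd ℂ) (∑ n ∈ Finset.range (N + 1), s n * y ^ n) := by
      simp only [hT, Finset.mul_sum, map_sum, map_mul, map_pow, hcy]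
      apply Finset.sum_congr rfl
      intro n _
      rw [div_pow, smul_eq_mul]; ring
    have hFpos : 0 < (F z).re := by
      have := hre z (by rw [mem_ball_zero_iff, hzn]; exact h1)
      simp [hF]; linarith
    have hsp := hs y hyn
    set W := ∑ n ∈ Finset.range (N + 1), s n * y ^ n
    have : (Complex.reCLM ∘ (S + T)) z = 2 * ((F z).re * W.re) := by
      simp only [Function.comp, Pi.add_apply, e1, e2, Complex.reCLM_apply]
      simp; ring
    rw [this]
    positivity
  rw [ContinuousLinearMap.circleAverage_comp_comm _ (cS.add cT), Real.circleAverage_add cS cT, aS, aT] at key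
  have e3 : ∑ n ∈ Finset.range (N + 1), (s n * r ^ n) * taylorCoeff F n
      = 2 * (∑ n ∈ Finset.range (N + 1), s n * r ^ n * taylorCoeff h n) - s 0 := by
    simp only [hFn, mul_sub, Finset.sum_sub_distrib, Finset.mul_sum]
    congr 1
    · apply Finset.sum_congr rfl; intro n _; ring
    · simp
  rw [e3] at key
  simp at key
  simpa using key

lemma moment_le (h : ℂ → ℂ) (hd : DifferentiableOn ℂ h (ball 0 1)) (h00 : h 0 = 1)
    (hre : ∀ z ∈ ball (0 : ℂ) 1, 1 / 2 < (h z).re) (M : ℝ) (N : ℕ) (q : ℕ → ℂ)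
    (hq : ∀ y : ℂ, ‖y‖ = 1 → (∑ n ∈ Finset.range (N + 1), q n * y ^ n).re ≤ M) :
    (∑ n ∈ Finset.range (N + 1), q n * taylorCoeff h n).re ≤ M := by
  set s : ℕ → ℂ := fun n => (if n = 0 then (M : ℂ) else 0) - q n with hs
  have es : ∀ u : ℕ → ℂ, u 0 = 1 → (∑ n ∈ Finset.range (N + 1), s n * u n)
      = M - ∑ n ∈ Finset.range (N + 1), q n * u n := by
    intro u hu
    simp [hs, sub_mul, Finset.sum_sub_distrib, hu]
  have hc0 : taylorCoeff h 0 = 1 := by simp [taylorCoeff, h00]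
  have hr : ∀ r : ℝ, 0 < r → r < 1 →
      0 ≤ (∑ n ∈ Finset.range (N + 1), s n * r ^ n * taylorCoeff h n).re := by
    intro r h0 h1
    apply moment_nonneg_r h hd h00 hre N s _ r h0 h1
    intro y hy
    rw [es (fun n => y ^ n) (by simp)]
    have := hq y hy
    simp only [Complex.sub_re, Complex.ofReal_re]
    linarith
  have hcont : Continuous (fun r : ℝ => (∑ n ∈ Finset.range (N + 1), s n * (r : ℂ) ^ n * taylorCoeff h n).re) := by
    fun_prop
  have hlim := (hcont.tendsto 1).mono_left (nhdsWithin_le_nhds (s := Set.Iio (1:ℝ)))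
  have := ge_of_tendsto hlim (b := 0) (by
    filter_upwards [Ioo_mem_nhdsLT (show (0:ℝ) < 1 by norm_num)] with r hr'
    exact hr r hr'.1 hr'.2)
  simp only [Complex.ofReal_one, one_pow, mul_one] at this
  rw [es _ hc0] at this
  simp only [Complex.sub_re, Complex.ofReal_re] at this
  linarith

lemma trilinear_le (h q : ℂ → ℂ) (hd : DifferentiableOn ℂ h (ball 0 1)) (h00 : h 0 = 1)
    (hre : ∀ z ∈ ball (0 : ℂ) 1, 1 / 2 < (h z).re)
    (qd : DifferentiableOn ℂ q (ball 0 1)) (q00 : q 0 = 1)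
    (qre : ∀ z ∈ ball (0 : ℂ) 1, 1 / 2 < (q z).re) (M : ℝ) (N : ℕ) (C : ℕ → ℕ → ℕ → ℂ)
    (hC : ∀ a b y : ℂ, ‖a‖ = 1 → ‖b‖ = 1 → ‖y‖ = 1 →
      (∑ i ∈ Finset.range (N + 1), ∑ j ∈ Finset.range (N + 1), ∑ k ∈ Finset.range (N + 1),
        C i j k * a ^ i * b ^ j * y ^ k).re ≤ M) :
    (∑ i ∈ Finset.range (N + 1), ∑ j ∈ Finset.range (N + 1), ∑ k ∈ Finset.range (N + 1),
        C i j k * taylorCoeff h i * taylorCoeff h j * taylorCoeff q k).re ≤ M := by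
  have s1 : ∀ b y : ℂ, ‖b‖ = 1 → ‖y‖ = 1 →
      (∑ i ∈ Finset.range (N + 1), ∑ j ∈ Finset.range (N + 1), ∑ k ∈ Finset.range (N + 1),
        C i j k * taylorCoeff h i * b ^ j * y ^ k).re ≤ M := by
    intro b y hb hy
    have := moment_le h hd h00 hre M N (fun i => ∑ j ∈ Finset.range (N + 1),
      ∑ k ∈ Finset.range (N + 1), C i j k * b ^ j * y ^ k) (by
        intro a ha
        convert hC a b y ha hb hy using 2
        simp only [Finset.sum_mul]
        refine Finset.sum_congr rfl fun i _ => Finset.sum_congr rfl fun j _ =>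
          Finset.sum_congr rfl fun k _ => by ring)
    convert this using 2
    simp only [Finset.sum_mul]
    refine Finset.sum_congr rfl fun i _ => Finset.sum_congr rfl fun j _ =>
          Finset.sum_congr rfl fun k _ => by ring
  have s2 : ∀ y : ℂ, ‖y‖ = 1 →
      (∑ i ∈ Finset.range (N + 1), ∑ j ∈ Finset.range (N + 1), ∑ k ∈ Finset.range (N + 1),
        C i j k * taylorCoeff h i * taylorCoeff h j * y ^ k).re ≤ M := by
    intro y hy
    have := moment_le h hd h00 hre M N (fun j => ∑ i ∈ Finset.range (N + 1),
      ∑ k ∈ Finset.range (N + 1), C i j k * taylorCoeff h i * y ^ k) (by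
        intro b hb
        convert s1 b y hb hy using 2
        rw [Finset.sum_comm]
        simp only [Finset.sum_mul]
        refine Finset.sum_congr rfl fun i _ => Finset.sum_congr rfl fun j _ =>
          Finset.sum_congr rfl fun k _ => by ring)
    convert this using 2
    rw [Finset.sum_comm]
    simp only [Finset.sum_mul]
    refine Finset.sum_congr rfl fun i _ => Finset.sum_congr rfl fun j _ =>
          Finset.sum_congr rfl fun k _ => by ring
  have key : ∀ u : ℕ → ℂ, (∑ i ∈ Finset.range (N + 1), ∑ j ∈ Finset.range (N + 1),
      ∑ k ∈ Finset.range (N + 1), C i j k * taylorCoeff h i * taylorCoeff h j * u k)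
      = ∑ k ∈ Finset.range (N + 1), (∑ i ∈ Finset.range (N + 1), ∑ j ∈ Finset.range (N + 1),
        C i j k * taylorCoeff h i * taylorCoeff h j) * u k := by
    intro u
    rw [Finset.sum_comm' (s := Finset.range (N + 1)) (t := fun _ => Finset.range (N + 1)) (t' := Finset.range (N + 1)) (s' := fun _ => Finset.range (N + 1)) (by simp)] 
    simp only [Finset.sum_mul]
    rw [Finset.sum_comm]
    rw [Finset.sum_comm (s := Finset.range (N + 1)) (t := Finset.range (N + 1))
      (f := fun k i => ∑ j ∈ Finset.range (N + 1), C i j k * taylorCoeff h i * taylorCoeff h j * u k)]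
    exact Finset.sum_congr rfl fun i _ => Finset.sum_comm
  rw [key]
  apply moment_le q qd q00 qre M N
  intro y hy
  rw [← key]
  exact s2 y hy

/-! ### Part 3: Jack's lemma and the square root of a starlike function -/

lemma jack_lemma (w : ℂ → ℂ) (hd : DifferentiableOn ℂ w (ball 0 1)) (w0 : w 0 = 0)
    (H : ∀ z ∈ ball (0 : ℂ) 1, z ≠ 0 → ‖w z‖ = 1 → ∀ m : ℝ, 1 ≤ m → z * deriv w z ≠ m * w z) :
    ∀ z ∈ ball (0 : ℂ) 1, ‖w z‖ < 1 := by
  intro z1 hz1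
  by_contra hcon
  push Not at hcon
  rw [mem_ball_zero_iff] at hz1
  have hsub : closedBall (0 : ℂ) ‖z1‖ ⊆ ball 0 1 := closedBall_subset_ball hz1
  have hcl : IsClosed (closedBall (0 : ℂ) ‖z1‖ ∩ {z | 1 ≤ ‖w z‖}) := by
    have hc : ContinuousOn (fun z => ‖w z‖) (closedBall (0 : ℂ) ‖z1‖) :=
      (hd.continuousOn.mono hsub).norm
    exact hc.preimage_isClosed_of_isClosed isClosed_closedBall isClosed_Ici
  have hcp : IsCompact (closedBall (0 : ℂ) ‖z1‖ ∩ {z | 1 ≤ ‖w z‖}) :=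
    (isCompact_closedBall (0 : ℂ) ‖z1‖).of_isClosed_subset hcl Set.inter_subset_left
  obtain ⟨z0, ⟨hz0, hw0⟩, hmin⟩ := hcp.exists_isMinOn ⟨z1, by simp, hcon⟩
    (continuous_norm.continuousOn (s := closedBall (0 : ℂ) ‖z1‖ ∩ {z | 1 ≤ ‖w z‖}))
  have hz0b : z0 ∈ ball (0 : ℂ) 1 := hsub hz0
  have hz0n : ‖z0‖ < 1 := by simpa using hz0b
  have hz0z1 : ‖z0‖ ≤ ‖z1‖ := by simpa using hz0
  have hlt : ∀ z : ℂ, ‖z‖ < ‖z0‖ → ‖w z‖ < 1 := by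
    intro z hz
    by_contra hc
    push Not at hc
    have := hmin (show z ∈ closedBall (0 : ℂ) ‖z1‖ ∩ {z | 1 ≤ ‖w z‖} from
      ⟨by simpa using hz.le.trans hz0z1, hc⟩)
    simp only [Set.mem_ofPred_eq] at this
    linarith
  have hne : z0 ≠ 0 := by
    rintro rfl
    simp only [Set.mem_ofPred_eq, w0, norm_zero] at hw0
    linarith
  have hpos : 0 < ‖z0‖ := norm_pos_iff.mpr hne
  have hschwarz : ∀ z : ℂ, ‖z‖ < ‖z0‖ → ‖w z‖ ≤ 1 / ‖z0‖ * ‖z‖ := by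
    intro z hz
    have := Complex.dist_le_div_mul_dist_of_mapsTo_ball (f := w) (c := 0) (R₁ := ‖z0‖) (R₂ := 1)
      (z := z) (hd.mono (ball_subset_ball hz0n.le)) (by
        intro u hu
        rw [w0]
        simpa using (hlt u (by simpa using hu)).le) (by simpa using hz)
    simpa [w0] using this
  have hda : ∀ z ∈ ball (0 : ℂ) 1, DifferentiableAt ℂ w z := fun z hz =>
    hd.differentiableAt (isOpen_ball.mem_nhds hz)
  -- bound on the circle
  have hcirc : ∀ z : ℂ, ‖z‖ = ‖z0‖ → ‖w z‖ ≤ 1 := by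
    intro z hz
    have hzb : z ∈ ball (0 : ℂ) 1 := by simpa [hz] using hz0n
    have hc : ContinuousAt (fun t : ℝ => ‖w (t * z)‖) 1 := by
      have h1 : ContinuousAt w (((1 : ℝ) : ℂ) * z) := by
        simpa using (hda z hzb).continuousAt
      exact (ContinuousAt.comp (f := fun t : ℝ => (t : ℂ) * z) h1 (by fun_prop)).norm
    have hlim := hc.tendsto.mono_left (nhdsWithin_le_nhds (s := Set.Iio (1:ℝ)))
    have := le_of_tendsto hlim (b := 1) (by
      filter_upwards [Ioo_mem_nhdsLT (show (0:ℝ) < 1 by norm_num)] with t ht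
      refine (hlt _ ?_).le
      rw [norm_mul, Complex.norm_real, Real.norm_of_nonneg ht.1.le, hz]
      nlinarith [ht.2])
    simpa using this
  have hw1 : ‖w z0‖ = 1 := le_antisymm (hcirc z0 rfl) hw0
  set D := z0 * deriv w z0 with hD
  set b := (starRingEnd ℂ) (w z0) with hb
  have hbn : ‖b‖ = 1 := by rw [hb, RCLike.norm_conj, hw1]
  have hbw : b * w z0 = 1 := by
    rw [hb, mul_comm, Complex.mul_conj, Complex.normSq_eq_norm_sq, hw1]; simp
  have hrele : ∀ u : ℂ, (b * u).re ≤ ‖u‖ := by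
    intro u
    have := Complex.re_le_norm (b * u)
    rwa [norm_mul, hbn, one_mul] at this
  have hder : HasDerivAt w (deriv w z0) z0 := (hda z0 hz0b).hasDerivAt
  -- radial
  have hrad : 1 ≤ (b * D).re := by
    have h1 : HasDerivAt (fun t : ℂ => b * w (t * z0)) (b * D) ((1 : ℝ) : ℂ) := by
      have h2 : HasDerivAt (fun t : ℂ => t * z0) z0 ((1 : ℝ) : ℂ) := by
        simpa using (hasDerivAt_id (((1 : ℝ) : ℂ))).mul_const z0
      have h3 : HasDerivAt w (deriv w z0) (((1 : ℝ) : ℂ) * z0) := by simpa using hder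
      have h4 := (HasDerivAt.comp (h := fun t : ℂ => t * z0) _ h3 h2).const_mul b
      refine HasDerivAt.congr_deriv h4 ?_
      rw [hD]; ring
    have h5 := h1.real_of_complex
    have h6 : HasDerivAt (fun t : ℝ => t - (b * w (t * z0)).re) (1 - (b * D).re) 1 :=
      (hasDerivAt_id (1 : ℝ)).sub h5
    have h7 := (hasDerivAt_iff_tendsto_slope.mp h6).mono_left (nhdsLT_le_nhdsNE 1)
    have h8 := le_of_tendsto h7 (b := 0) (by
      filter_upwards [Ioo_mem_nhdsLT (show (0:ℝ) < 1 by norm_num)] with t ht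
      rw [slope_def_field]
      have hn : ‖(t : ℂ) * z0‖ = t * ‖z0‖ := by
        rw [norm_mul, Complex.norm_real, Real.norm_of_nonneg ht.1.le]
      have hs := hschwarz (t * z0) (by rw [hn]; nlinarith [ht.2])
      rw [hn] at hs
      have hs2 : ‖w (t * z0)‖ ≤ t := by
        refine hs.trans (le_of_eq ?_)
        field_simp
      have := hrele (w (t * z0))
      apply div_nonpos_of_nonneg_of_nonpos
      · simp only [Complex.ofReal_one, one_mul, hbw, Complex.one_re]; linarith
      · linarith [ht.2])
    linarith
  -- tangential
  have htan : (b * D).im = 0 := by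
    have h1 : HasDerivAt (fun s : ℂ => b * w (z0 * Complex.exp (s * Complex.I))) (b * (D * Complex.I))
        ((0 : ℝ) : ℂ) := by
      have h2 : HasDerivAt (fun s : ℂ => z0 * Complex.exp (s * Complex.I)) (z0 * Complex.I)
          ((0 : ℝ) : ℂ) := by
        simpa using (((hasDerivAt_id (((0 : ℝ) : ℂ))).mul_const Complex.I).cexp).const_mul z0
      have h3 : HasDerivAt w (deriv w z0) (z0 * Complex.exp (((0 : ℝ) : ℂ) * Complex.I)) := by
        simpa using hder
      have h4 := (HasDerivAt.comp (h := fun s : ℂ => z0 * Complex.exp (s * Complex.I)) _ h3 h2).const_mul b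
      refine HasDerivAt.congr_deriv h4 ?_
      rw [hD]; ring
    have h5 := h1.real_of_complex
    have hmax : IsLocalMax (fun s : ℝ => (b * w (z0 * Complex.exp (s * Complex.I))).re) 0 := by
      refine Filter.Eventually.of_forall ?_
      intro s
      refine (hrele _).trans ((hcirc _ ?_).trans (le_of_eq ?_))
      · rw [norm_mul, Complex.norm_exp_ofReal_mul_I, mul_one]
      · simp [hbw]
    have h6 := hmax.hasDerivAt_eq_zero h5
    rw [← mul_assoc, Complex.mul_I_re] at h6
    linarith
  refine H z0 hz0b hne hw1 (b * D).re hrad ?_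
  have hre : (((b * D).re : ℝ) : ℂ) = b * D := by
    apply Complex.ext <;> simp [htan]
  rw [hre, ← hD]
  linear_combination (-D) * hbw

lemma starlike_sqrt (g : ℂ → ℂ) (hg : IsStarlikeFn g) :
    ∃ h : ℂ → ℂ, DifferentiableOn ℂ h (ball 0 1) ∧ h 0 = 1 ∧
      (∀ z ∈ ball (0 : ℂ) 1, 1 / 2 < (h z).re) ∧ ∀ z ∈ ball (0 : ℂ) 1, g z = z * h z ^ 2 := by
  obtain ⟨gd, g0, g1, gs⟩ := hg
  have h0b : (0 : ℂ) ∈ ball (0 : ℂ) 1 := mem_ball_self one_pos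
  set G := dslope g 0 with hG
  have Gd : DifferentiableOn ℂ G (ball 0 1) :=
    (Complex.differentiableOn_dslope (isOpen_ball.mem_nhds h0b)).mpr gd
  have G0 : G 0 = 1 := by rw [hG, dslope_same, g1]
  have gG : ∀ z, g z = z * G z := by
    intro z
    have := sub_smul_dslope g 0 z
    simp only [sub_zero, g0, smul_eq_mul] at this
    exact this.symm
  have Gne : ∀ z ∈ ball (0 : ℂ) 1, G z ≠ 0 := by
    intro z hz hz0
    by_cases h : z = 0
    · rw [h, G0] at hz0; exact one_ne_zero hz0
    · have := gs z ⟨hz, h⟩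
      rw [gG z, hz0] at this
      simp at this
  have Ga : ∀ z ∈ ball (0 : ℂ) 1, HasDerivAt G (deriv G z) z := fun z hz =>
    (Gd.differentiableAt (isOpen_ball.mem_nhds hz)).hasDerivAt
  have Gdd : DifferentiableOn ℂ (fun z => deriv G z / G z) (ball 0 1) :=
    (Gd.deriv isOpen_ball).div Gd Gne
  obtain ⟨L, L0, hL⟩ := Gdd.isExactOn_ball.with_val_at 0 0
  have hexp : ∀ z ∈ ball (0 : ℂ) 1, Complex.exp (L z) = G z := by
    have hder : ∀ z ∈ ball (0 : ℂ) 1, HasDerivAt (fun z => G z * Complex.exp (-L z)) 0 z := by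
      intro z hz
      have := (Ga z hz).mul (hL z hz).neg.cexp
      refine HasDerivAt.congr_deriv this ?_
      have := Gne z hz
      field_simp
      ring
    intro z hz
    have := isOpen_ball.is_const_of_deriv_eq_zero (convex_ball (0:ℂ) 1).isPreconnected
      (f := fun z => G z * Complex.exp (-L z))
      (fun z hz => (hder z hz).differentiableAt.differentiableWithinAt)
      (fun z hz => (hder z hz).deriv) hz h0b
    simp only [L0, G0, neg_zero, Complex.exp_zero, mul_one] at this
    rw [Complex.exp_neg] at this
    have hne := Complex.exp_ne_zero (L z)
    field_simp at this
    exact this.symm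
  set w : ℂ → ℂ := fun z => 1 - Complex.exp (-(L z / 2)) with hw
  have wder : ∀ z ∈ ball (0 : ℂ) 1,
      HasDerivAt w (Complex.exp (-(L z / 2)) * (deriv G z / G z / 2)) z := by
    intro z hz
    have := ((hL z hz).div_const 2).neg.cexp.const_sub 1
    refine HasDerivAt.congr_deriv this ?_
    simp only [Pi.neg_apply]
    ring
  have hwlt := jack_lemma w (fun z hz => (wder z hz).differentiableAt.differentiableWithinAt)
    (by simp [hw, L0]) (by
      intro z hz hz0 hn m hm heq
      rw [(wder z hz).deriv] at heq
      have hpos := gs z ⟨hz, hz0⟩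
      set E := Complex.exp (-(L z / 2)) with hE
      have hE0 : E ≠ 0 := Complex.exp_ne_zero _
      have hwE : w z = 1 - E := rfl
      have hGz := Gne z hz
      have gder : deriv g z = G z + z * deriv G z := by
        have h1 : HasDerivAt (fun z => z * G z) (1 * G z + z * deriv G z) z :=
          (hasDerivAt_id z).mul (Ga z hz)
        have h2 : g = fun z => z * G z := funext gG
        rw [h2, h1.deriv, one_mul]
      have e1 : z * deriv g z / g z = 1 + z * deriv G z / G z := by
        rw [gder, gG z]; field_simp
      have e2 : z * deriv G z / G z = 2 * m * ((1 - E) / E) := by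
        rw [hwE] at heq
        field_simp
        field_simp at heq
        linear_combination heq
      rw [e1, e2] at hpos
      rw [hwE] at hn
      have e3 : ((1 - E) / E).re = -1 / 2 := by
        have hnE : Complex.normSq E ≠ 0 := by simpa using hE0
        have h4 : Complex.normSq (1 - E) = 1 := by
          rw [Complex.normSq_eq_norm_sq, hn]; norm_num
        rw [Complex.div_re]
        rw [Complex.normSq_apply] at h4 hnE ⊢
        simp only [Complex.sub_re, Complex.one_re, Complex.sub_im, Complex.one_im] at h4 ⊢
        rw [← add_div, div_eq_div_iff hnE two_ne_zero]
        linarith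
      have e4 : (1 + 2 * (m : ℂ) * ((1 - E) / E)).re = 1 + 2 * m * ((1 - E) / E).re := by
        rw [Complex.add_re, show (2 * (m : ℂ)) = ((2 * m : ℝ) : ℂ) by push_cast; ring,
          Complex.re_ofReal_mul]
        simp
      rw [e4, e3] at hpos
      linarith)
  refine ⟨fun z => Complex.exp (L z / 2), ?_, by simp [L0], ?_, ?_⟩
  · intro z hz
    exact ((hL z hz).div_const 2).cexp.differentiableAt.differentiableWithinAt
  · intro z hz
    have hlt := hwlt z hz
    set K := Complex.exp (L z / 2) with hK
    have hK0 : K ≠ 0 := Complex.exp_ne_zero _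
    have e1 : w z = (K - 1) / K := by
      simp only [hw, Complex.exp_neg, ← hK]; field_simp
    rw [e1, norm_div, div_lt_one (norm_pos_iff.mpr hK0)] at hlt
    have h2 : ‖K - 1‖ ^ 2 < ‖K‖ ^ 2 := by
      have := norm_nonneg (K - 1)
      nlinarith
    rw [Complex.sq_norm, Complex.sq_norm, Complex.normSq_apply, Complex.normSq_apply] at h2
    simp only [Complex.sub_re, Complex.one_re, Complex.sub_im, Complex.one_im] at h2
    nlinarith
  · intro z hz
    simp only
    rw [gG z, ← hexp z hz, ← Complex.exp_nat_mul]
    congr 2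
    push_cast; ring

/-! ### Part 4: assembling the proof -/

lemma taylorCoeff_mul (f g : ℂ → ℂ) (hf : AnalyticAt ℂ f 0) (hg : AnalyticAt ℂ g 0) (n : ℕ) :
    taylorCoeff (f * g) n
      = ∑ i ∈ Finset.range (n + 1), taylorCoeff f i * taylorCoeff g (n - i) := by
  unfold taylorCoeff
  rw [iteratedDeriv_mul hf.contDiffAt hg.contDiffAt, Finset.sum_div]
  apply Finset.sum_congr rfl
  intro i hi
  have hi' : i ≤ n := by have := Finset.mem_range.mp hi; omega
  rw [Nat.cast_choose ℂ hi']
  have h1 : (n.factorial : ℂ) ≠ 0 := by exact_mod_cast n.factorial_ne_zero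
  have h2 : (i.factorial : ℂ) ≠ 0 := by exact_mod_cast i.factorial_ne_zero
  have h3 : ((n - i).factorial : ℂ) ≠ 0 := by exact_mod_cast (n - i).factorial_ne_zero
  field_simp

lemma taylorCoeff_deriv (f : ℂ → ℂ) (n : ℕ) :
    taylorCoeff (deriv f) n = (n + 1) * taylorCoeff f (n + 1) := by
  unfold taylorCoeff
  rw [iteratedDeriv_succ', Nat.factorial_succ]
  have h1 : (n.factorial : ℂ) ≠ 0 := by exact_mod_cast n.factorial_ne_zero
  have h2 : (n : ℂ) + 1 ≠ 0 := by exact_mod_cast n.succ_ne_zero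
  push_cast
  field_simp

lemma taylorCoeff_affine (q : ℂ → ℂ) (q0 : q 0 = 1) (κ : ℂ) (k : ℕ) :
    taylorCoeff (fun z => (1 - κ) + κ * q z) k = (if k = 0 then 1 else κ) * taylorCoeff q k := by
  cases k with
  | zero => simp [taylorCoeff, q0]
  | succ n =>
    have e : deriv (fun z => (1 - κ) + κ * q z) = fun z => κ * deriv q z := by
      ext z
      rw [deriv_const_add, deriv_const_mul_field]
    simp only [taylorCoeff, iteratedDeriv_succ', e, iteratedDeriv_const_mul_field]
    simp
    ring

noncomputable def zalC (α β κ : ℂ) (i j k : ℕ) : ℂ :=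
  (if i + j + k = 3 then α else if i + j + k = 6 then -β else 0) * (if k = 0 then 1 else κ)

noncomputable def zalT (m : ℕ) (κ : ℂ) (u v w : ℕ → ℂ) : ℂ :=
  ∑ j ∈ Finset.range (m + 1), (∑ i ∈ Finset.range (j + 1), u i * v (j - i)) *
    ((if m - j = 0 then 1 else κ) * w (m - j))

lemma zalC_sum (α β κ : ℂ) (u v w : ℕ → ℂ) :
    (∑ i ∈ Finset.range (6 + 1), ∑ j ∈ Finset.range (6 + 1), ∑ k ∈ Finset.range (6 + 1),
      zalC α β κ i j k * u i * v j * w k) = α * zalT 3 κ u v w - β * zalT 6 κ u v w := by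
  simp only [zalC, zalT, Finset.sum_range_succ, Finset.sum_range_zero]
  norm_num
  ring

lemma zalT_pow (m : ℕ) (hm : m + 1 < 7) (κ a b y : ℂ) :
    zalT (m + 1) κ (fun i => a ^ i) (fun i => b ^ i) (fun i => y ^ i)
      = zalH (m + 1) a b y - ((1 - κ) * y) * zalH m a b y := by
  unfold zalT zalH
  rw [Finset.sum_range_succ _ (m + 1),
    Finset.sum_range_succ (fun j => zalh j a b * y ^ (m + 1 - j)) (m + 1), Finset.mul_sum,
    add_sub_right_comm, ← Finset.sum_sub_distrib]
  congr 1
  · apply Finset.sum_congr rfl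
    intro j hj
    have hj' : j ≤ m := by have := Finset.mem_range.mp hj; omega
    have e : m + 1 - j = (m - j) + 1 := by omega
    rw [e, if_neg (by omega), zalh, pow_succ]
    ring
  · simp [zalh]

lemma rotate_exists (X : ℂ) : ∃ ξ : ℂ, ‖ξ‖ = 1 ∧ (ξ ^ 2 * X).re = ‖X‖ := by
  refine ⟨Complex.exp ((-(X.arg / 2) : ℝ) * Complex.I), Complex.norm_exp_ofReal_mul_I _, ?_⟩
  have h := Complex.norm_mul_exp_arg_mul_I X
  have : Complex.exp ((-(X.arg / 2) : ℝ) * Complex.I) ^ 2 * X = ‖X‖ := by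
    conv_lhs => arg 2; rw [← h]
    rw [← Complex.exp_nat_mul, mul_left_comm, ← Complex.exp_add]
    rw [show ((2 : ℕ) : ℂ) * ((-(X.arg / 2) : ℝ) * Complex.I) + X.arg * Complex.I = 0 by
      push_cast; ring]
    simp
  rw [this, Complex.ofReal_re]

/-- A close-to-convex function has `f' = h ^ 2 * p` with `h` and `q` of real part above `1/2`. -/
lemma ctc_factor (f : ℂ → ℂ) (hf : IsCloseToConvex f) :
    ∃ (h q : ℂ → ℂ) (κ : ℂ), ‖1 - κ‖ = 1 ∧
      DifferentiableOn ℂ h (ball 0 1) ∧ h 0 = 1 ∧ (∀ z ∈ ball (0 : ℂ) 1, 1 / 2 < (h z).re) ∧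
      DifferentiableOn ℂ q (ball 0 1) ∧ q 0 = 1 ∧ (∀ z ∈ ball (0 : ℂ) 1, 1 / 2 < (q z).re) ∧
      ∀ z ∈ ball (0 : ℂ) 1, deriv f z = h z * h z * ((1 - κ) + κ * q z) := by
  obtain ⟨fd, f0, f1, θ, g, hg, hre⟩ := hf
  obtain ⟨h, hd, h0, hhre, hgh⟩ := starlike_sqrt g hg
  have hne : ∀ z ∈ ball (0 : ℂ) 1, h z ≠ 0 := by
    intro z hz h0
    have := hhre z hz
    rw [h0] at this
    norm_num at this
  set p : ℂ → ℂ := fun z => deriv f z / (h z * h z) with hp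
  have pd : DifferentiableOn ℂ p (ball 0 1) :=
    (fd.deriv isOpen_ball).div (hd.mul hd) (fun z hz => mul_ne_zero (hne z hz) (hne z hz))
  have p0 : p 0 = 1 := by simp [hp, f1, h0]
  set e := Complex.exp (θ * Complex.I) with he
  have ppos : ∀ z ∈ ball (0 : ℂ) 1, z ≠ 0 → 0 < (e * p z).re := by
    intro z hz hz0
    have := hre z ⟨hz, hz0⟩
    have hhz := hne z hz
    rw [hgh z hz] at this
    convert this using 2
    simp only [hp]
    field_simp
  have ere : e.re = Real.cos θ := Complex.exp_ofReal_mul_I_re θ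
  have eim : e.im = Real.sin θ := Complex.exp_ofReal_mul_I_im θ
  have hcos : 0 < Real.cos θ := by
    have hsub : closedBall (0 : ℂ) (1 / 2) ⊆ ball 0 1 := closedBall_subset_ball (by norm_num)
    have hPd : DifferentiableOn ℂ (fun z => e * p z) (closedBall 0 (1 / 2)) :=
      (pd.const_mul e).mono hsub
    have hcont : ContinuousOn (fun z => (e * p z).re) (sphere (0 : ℂ) (1 / 2)) :=
      Complex.continuous_re.comp_continuousOn (hPd.continuousOn.mono sphere_subset_closedBall)
    obtain ⟨z0, hz0, hmin⟩ := (isCompact_sphere (0 : ℂ) (1 / 2)).exists_isMinOn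
      (NormedSpace.sphere_nonempty.mpr (by norm_num)) hcont
    have hδ := ppos z0 (hsub (sphere_subset_closedBall hz0)) (ne_of_mem_sphere hz0 (by norm_num))
    have := Complex.norm_le_of_forall_mem_frontier_norm_le (U := ball (0:ℂ) (1 / 2)) isBounded_ball
      (f := fun z => Complex.exp (-(e * p z))) (C := Real.exp (-(e * p z0).re))
      ((hPd.neg.cexp.mono closure_ball_subset_closedBall).diffContOnCl) (z := 0) (by
        intro z hz
        rw [frontier_ball _ (by norm_num)] at hz
        rw [Complex.norm_exp, Real.exp_le_exp, Complex.neg_re]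
        have := hmin hz
        simp only [Set.mem_ofPred_eq] at this
        linarith) (subset_closure (mem_ball_self (by norm_num)))
    rw [Complex.norm_exp, Real.exp_le_exp, p0, mul_one, Complex.neg_re, ere] at this
    linarith
  set κ : ℂ := 2 * Real.cos θ / e with hκ
  have e0 : e ≠ 0 := Complex.exp_ne_zero _
  have hc0 : (Real.cos θ : ℂ) ≠ 0 := by exact_mod_cast hcos.ne'
  have κ0 : κ ≠ 0 := div_ne_zero (mul_ne_zero two_ne_zero hc0) e0
  have en : ‖e‖ = 1 := Complex.norm_exp_ofReal_mul_I θ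
  refine ⟨h, fun z => 1 + (p z - 1) / κ, κ, ?_, hd, h0, hhre, ?_, by simp [p0], ?_, ?_⟩
  · have : 1 - κ = -((starRingEnd ℂ) e / e) := by
      rw [hκ]
      field_simp
      apply Complex.ext
      · simp [ere, -Complex.ofReal_cos]; ring
      · simp [-Complex.ofReal_cos]
    rw [this, norm_neg, norm_div, RCLike.norm_conj, en, div_one]
  · exact ((pd.sub_const 1).div_const κ).const_add 1
  · intro z hz
    by_cases hz0 : z = 0
    · simp [hz0, p0]; norm_num
    · have h1 := ppos z hz hz0
      set Q := 1 + (p z - 1) / κ with hQ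
      have : e * p z = e + ((2 * Real.cos θ : ℝ) : ℂ) * (Q - 1) := by
        rw [hQ, hκ]
        push_cast
        push_cast at hc0
        field_simp
        ring
      rw [this, Complex.add_re, Complex.re_ofReal_mul, ere, Complex.sub_re, Complex.one_re] at h1
      show 1 / 2 < Q.re
      nlinarith
  · intro z hz
    have hhz := hne z hz
    have : (1 - κ) + κ * (1 + (p z - 1) / κ) = p z := by field_simp; ring
    simp only [this]
    simp only [hp]
    field_simp

theorem generalized_zalcman_closeToConvex_n4_large_lambda
    (lam : ℝ) (hlam : 1 ≤ lam)
    (f : ℂ → ℂ) (hf : IsCloseToConvex f) :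
    ‖(lam : ℂ) * (taylorCoeff f 4) ^ 2 - taylorCoeff f 7‖ ≤ 16 * lam - 7 := by
  obtain ⟨h, q, κ, hκ, hd, h0, hre, qd, q0, qre, hfac⟩ := ctc_factor f hf
  have nb : ball (0 : ℂ) 1 ∈ nhds (0 : ℂ) := ball_mem_nhds 0 one_pos
  have ha : AnalyticAt ℂ h 0 := hd.analyticAt nb
  have qa : AnalyticAt ℂ q 0 := qd.analyticAt nb
  have pa : AnalyticAt ℂ (fun z => (1 - κ) + κ * q z) 0 :=
    analyticAt_const.add (analyticAt_const.mul qa)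
  have hev : deriv f =ᶠ[nhds 0] (h * h) * (fun z => (1 - κ) + κ * q z) := by
    filter_upwards [nb] with z hz
    exact hfac z hz
  have hT : ∀ n : ℕ, ((n : ℂ) + 1) * taylorCoeff f (n + 1)
      = zalT n κ (taylorCoeff h) (taylorCoeff h) (taylorCoeff q) := by
    intro n
    rw [← taylorCoeff_deriv]
    have : taylorCoeff (deriv f) n = taylorCoeff ((h * h) * (fun z => (1 - κ) + κ * q z)) n := by
      unfold taylorCoeff
      rw [hev.iteratedDeriv_eq]
    rw [this, taylorCoeff_mul _ _ (ha.mul ha) pa]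
    unfold zalT
    apply Finset.sum_congr rfl
    intro j _
    rw [taylorCoeff_mul _ _ ha ha, taylorCoeff_affine q q0]
  obtain ⟨ξ, hξ, hX⟩ := rotate_exists ((lam : ℂ) * (taylorCoeff f 4) ^ 2 - taylorCoeff f 7)
  set c : ℝ := (ξ * taylorCoeff f 4).re with hc
  have key := trilinear_le h q hd h0 hre qd q0 qre (lam * c ^ 2 + 16 * lam - 7) 6
    (zalC (c * lam * ξ / 2) (ξ ^ 2 / 7) κ) (by
      intro a b y ha hb hy
      rw [zalC_sum _ _ _ (fun i => a ^ i) (fun i => b ^ i) (fun i => y ^ i),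
        zalT_pow 2 (by norm_num), zalT_pow 5 (by norm_num)]
      exact zalH_le c lam hlam ξ ((1 - κ) * y) a b y hξ (by rw [norm_mul, hκ, hy, one_mul])
        ha.le hb.le hy.le)
  rw [zalC_sum, ← hT 3, ← hT 6] at key
  have e1 : (c * lam * ξ / 2) * ((((3 : ℕ) : ℂ) + 1) * taylorCoeff f (3 + 1))
      - ξ ^ 2 / 7 * ((((6 : ℕ) : ℂ) + 1) * taylorCoeff f (6 + 1))
      = ((2 * c * lam : ℝ) : ℂ) * (ξ * taylorCoeff f 4) - ξ ^ 2 * taylorCoeff f 7 := by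
    push_cast; ring
  rw [e1, Complex.sub_re, Complex.re_ofReal_mul, ← hc] at key
  have e2 : ξ ^ 2 * ((lam : ℂ) * (taylorCoeff f 4) ^ 2 - taylorCoeff f 7)
      = (lam : ℂ) * (ξ * taylorCoeff f 4) ^ 2 - ξ ^ 2 * taylorCoeff f 7 := by ring
  rw [← hX, e2, Complex.sub_re, Complex.re_ofReal_mul]
  have e3 : ((ξ * taylorCoeff f 4) ^ 2).re ≤ c ^ 2 := by
    rw [pow_two, Complex.mul_re, ← hc]
    nlinarith [mul_self_nonneg (ξ * taylorCoeff f 4).im]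
  nlinarith [mul_le_mul_of_nonneg_left e3 (by linarith : (0:ℝ) ≤ lam)]
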